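/- arXiv:1307.7672 — 2 statements merged into one kernel-verified Lean document; each statement's English description precedes it below -/
import Mathlib

section
/- Let A be a finite-dimensional (left) Leibniz algebra over an algebraically closed field of characteristic zero. If a subalgebra H of A is minimal in the set of all Engel subalgebras of A (H = E_A(a) for some a ∈ A, and no Engel subalgebra E_A(b), b ∈ A, is properly contained in H), then H is a Cartan subalgebra of A. In particular, A has a Cartan subalgebra. -/
/-- Span of all brackets `[u, v]` with `u ∈ p`, `v ∈ q`. -/
def bracketSpan {K A : Type*} [Field K] [AddCommGroup A] [Module K A]
    (br : A →ₗ[K] A →ₗ[K] A) (p q : Submodule K A) : Submodule K A :=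
  Submodule.span K {x | ∃ a ∈ p, ∃ b ∈ q, br a b = x}

/-- Derived series: `derSeries br 0 = A` and
`derSeries br (n+1) = [derSeries br n, derSeries br n]`; so `derSeries br n = A^(n+1)`.
The algebra is solvable iff some term vanishes. -/
def derSeries {K A : Type*} [Field K] [AddCommGroup A] [Module K A]
    (br : A →ₗ[K] A →ₗ[K] A) : ℕ → Submodule K A
  | 0 => ⊤
  | n + 1 => bracketSpan br (derSeries br n) (derSeries br n)

/-- Lower central series: `lcs br 0 = A` and `lcs br (n+1) = [A, lcs br n]`;
so `lcs br n = A^(n+1)`.  The algebra is nilpotent iff some term vanishes. -/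
def lcs {K A : Type*} [Field K] [AddCommGroup A] [Module K A]
    (br : A →ₗ[K] A →ₗ[K] A) : ℕ → Submodule K A
  | 0 => ⊤
  | n + 1 => bracketSpan br ⊤ (lcs br n)

/-- Lower central series of a subalgebra `H` (computed inside the ambient algebra):
`lcsIn br H 0 = H`, `lcsIn br H (n+1) = [H, lcsIn br H n]`.
A subalgebra `H` is nilpotent iff some term vanishes. -/
def lcsIn {K A : Type*} [Field K] [AddCommGroup A] [Module K A]
    (br : A →ₗ[K] A →ₗ[K] A) (H : Submodule K A) : ℕ → Submodule K A
  | 0 => H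
  | n + 1 => bracketSpan br H (lcsIn br H n)

/-- The Engel subalgebra `E_A(a)`: the Fitting null component of the left
multiplication operator `L_a = br a`, i.e. `{x : A | ∃ k, (L_a)^k x = 0}`. -/
def engel {K A : Type*} [Field K] [AddCommGroup A] [Module K A]
    (br : A →ₗ[K] A →ₗ[K] A) (a : A) : Submodule K A :=
  ⨆ k : ℕ, LinearMap.ker ((br a) ^ k)

/-- A Cartan subalgebra: a nilpotent subalgebra that equals its own normalizer. -/
def IsCartanSubalgebra {K A : Type*} [Field K] [AddCommGroup A] [Module K A]
    (br : A →ₗ[K] A →ₗ[K] A) (H : Submodule K A) : Prop :=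
  (∀ x ∈ H, ∀ y ∈ H, br x y ∈ H) ∧
  (∃ m : ℕ, lcsIn br H m = ⊥) ∧
  (∀ x : A, (∀ h ∈ H, br x h ∈ H ∧ br h x ∈ H) → x ∈ H)

open Module in
/-- If `F` is injective then `F + t G` is injective for all but finitely many `t`. -/
lemma finite_not_injective_aux {K V : Type*} [Field K] [AddCommGroup V] [Module K V]
    [FiniteDimensional K V] (F G : V →ₗ[K] V) (hF : LinearMap.ker F = ⊥) :
    {t : K | LinearMap.ker (F + t • G) ≠ ⊥}.Finite := by
  classical
  let b := finBasis K V
  let M := LinearMap.toMatrix b b F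
  let N := LinearMap.toMatrix b b G
  let P : Polynomial K :=
    (M.map Polynomial.C + (Polynomial.X : Polynomial K) • N.map Polynomial.C).det
  have hP : ∀ t : K, P.eval t = LinearMap.det (F + t • G) := by
    intro t
    rw [← LinearMap.det_toMatrix b, ← Polynomial.coe_evalRingHom, RingHom.map_det]
    congr 1
    ext i j
    simp [M, N, mul_comm t]
  have hP0 : P ≠ 0 := by
    intro h
    have h0 := hP 0
    rw [h] at h0
    simp only [Polynomial.eval_zero, zero_smul, add_zero] at h0
    have := LinearMap.bot_lt_ker_of_det_eq_zero h0.symm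
    exact this.ne' hF
  refine (P.rootSet_finite K).subset ?_
  intro t ht
  rw [Polynomial.mem_rootSet]
  refine ⟨hP0, ?_⟩
  rw [Polynomial.coe_aeval_eq_eval, hP]
  by_contra h
  exact ht (LinearMap.ker_eq_bot'.2 fun x hx => by
    have := (LinearMap.equivOfDetNeZero _ h).injective
    apply this
    simpa using hx)

open Module in
/-- If `(F + t G) ^ k = 0` for infinitely many `t`, then for all `t`. -/
lemma pow_eq_zero_aux {K V : Type*} [Field K] [AddCommGroup V] [Module K V]
    [FiniteDimensional K V] (F G : V →ₗ[K] V) (k : ℕ)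
    (h : {t : K | (F + t • G) ^ k = 0}.Infinite) (s : K) : (F + s • G) ^ k = 0 := by
  classical
  let b := finBasis K V
  let M := LinearMap.toMatrix b b F
  let N := LinearMap.toMatrix b b G
  let P := (M.map Polynomial.C + (Polynomial.X : Polynomial K) • N.map Polynomial.C) ^ k
  have hP : ∀ t : K, P.map (Polynomial.evalRingHom t) =
      LinearMap.toMatrix b b ((F + t • G) ^ k) := by
    intro t
    have h1 : LinearMap.toMatrix b b ((F + t • G) ^ k)
        = (LinearMap.toMatrix b b (F + t • G)) ^ k :=
      map_pow (LinearMap.toMatrixAlgEquiv b) _ _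
    rw [h1]
    change (Polynomial.evalRingHom t).mapMatrix P = _
    rw [map_pow]
    congr 1
    ext i j
    simp [M, N, mul_comm t]
  have hP0 : P = 0 := by
    ext1 i j
    refine Polynomial.eq_zero_of_infinite_isRoot _ (h.mono ?_)
    intro t ht
    have := congrFun (congrFun (hP t) i) j
    have ht' : (F + t • G) ^ k = 0 := ht
    rw [ht'] at this
    simpa using this
  have := hP s
  rw [hP0] at this
  apply (LinearMap.toMatrix b b).injective
  rw [← this]
  ext i j
  simp

section

variable {K A : Type*} [Field K] [AddCommGroup A] [Module K A]
  (br : A →ₗ[K] A →ₗ[K] A)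

lemma mem_engel_aux (a x : A) : x ∈ engel br a ↔ ∃ k : ℕ, ((br a) ^ k) x = 0 := by
  unfold engel
  rw [Submodule.mem_iSup_of_directed]
  · simp
  · refine Monotone.directed_le ?_
    intro m n hmn x hx
    obtain ⟨c, rfl⟩ := Nat.exists_eq_add_of_le' hmn
    rw [LinearMap.mem_ker] at hx ⊢
    rw [pow_add, Module.End.mul_apply, hx, map_zero]

lemma engel_br_mem_iff (a x : A) : br a x ∈ engel br a ↔ x ∈ engel br a := by
  rw [mem_engel_aux, mem_engel_aux]
  constructor
  · rintro ⟨k, hk⟩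
    exact ⟨k + 1, by rwa [pow_succ, Module.End.mul_apply]⟩
  · rintro ⟨k, hk⟩
    exact ⟨k, by rw [← Module.End.mul_apply, ← pow_succ, pow_succ', Module.End.mul_apply, hk,
      map_zero]⟩

lemma engel_subalgebra_aux
    (leibniz : ∀ a b c : A, br a (br b c) = br (br a b) c + br b (br a c)) (a : A) :
    ∀ n i j : ℕ, i + j ≤ n → ∀ x y : A, ((br a) ^ i) x = 0 → ((br a) ^ j) y = 0 →
      ((br a) ^ n) (br x y) = 0 := by
  intro n
  induction n with
  | zero =>
    intro i j hij x y hx hy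
    obtain rfl : i = 0 := by omega
    have : x = 0 := by simpa using hx
    simp [this]
  | succ n ih =>
    intro i j hij x y hx hy
    rw [pow_succ, Module.End.mul_apply, leibniz, map_add]
    rcases i with _ | i
    · have : x = 0 := by simpa using hx
      simp [this]
    rcases j with _ | j
    · have : y = 0 := by simpa using hy
      simp [this]
    rw [ih i (j + 1) (by omega) _ _ (by rwa [pow_succ, Module.End.mul_apply] at hx) hy,
      ih (i + 1) j (by omega) _ _ hx (by rwa [pow_succ, Module.End.mul_apply] at hy), add_zero]

lemma exists_mem_engel_aux [FiniteDimensional K A]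
    (leibniz : ∀ a b c : A, br a (br b c) = br (br a b) c + br b (br a c)) (a : A) :
    ∃ a' ∈ engel br a, br a' = br a := by
  let N := LinearMap.ker br
  have hN : ∀ x ∈ N, br a x ∈ N := by
    intro x hx
    rw [LinearMap.mem_ker] at hx ⊢
    ext c
    have := leibniz a x c
    simp only [hx, LinearMap.zero_apply, map_zero, add_zero] at this
    simpa using this.symm
  have haa : br a a ∈ N := by
    rw [LinearMap.mem_ker]
    ext c
    have := leibniz a a c
    simpa using this
  let s : ℕ →o (Submodule K A)ᵒᵈ :=
    ⟨fun n => OrderDual.toDual (N.map ((br a) ^ n)), by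
      refine monotone_nat_of_le_succ ?_
      intro n
      rw [OrderDual.toDual_le_toDual]
      rintro _ ⟨x, hx, rfl⟩
      exact ⟨br a x, hN x hx, by rw [pow_succ, Module.End.mul_apply]⟩⟩
  obtain ⟨n, hn⟩ := IsArtinian.monotone_stabilizes s
  have h1 : N.map ((br a) ^ n) = N.map ((br a) ^ (n + 1)) := hn (n + 1) (Nat.le_succ n)
  have h2 : ((br a) ^ (n + 1)) a ∈ N.map ((br a) ^ (n + 1)) := by
    rw [← h1]
    exact ⟨br a a, haa, by rw [pow_succ, Module.End.mul_apply]⟩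
  obtain ⟨z, hz, hza⟩ := h2
  refine ⟨a - z, ?_, ?_⟩
  · rw [mem_engel_aux]
    exact ⟨n + 1, by rw [map_sub, hza, sub_self]⟩
  · have : br z = 0 := hz
    rw [map_sub, this, sub_zero]

/-- Minimality forces every `L_y`, `y ∈ H`, to be nilpotent on `H`. -/
lemma nilpotent_on_engel_aux [Infinite K] [FiniteDimensional K A]
    (a : A)
    (hsub : ∀ x ∈ engel br a, ∀ y ∈ engel br a, br x y ∈ engel br a)
    (hmin : ∀ b : A, engel br b ≤ engel br a → engel br b = engel br a)
    (y : A) (hy : y ∈ engel br a) :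
    ∀ x ∈ engel br a, ((br y) ^ (Module.finrank K (engel br a))) x = 0 := by
  set H := engel br a with hH
  have ha : ∀ x ∈ H, br a x ∈ H := fun x hx => (engel_br_mem_iff br a x).2 hx
  have hu : ∀ x ∈ H, br (y - a) x ∈ H := fun x hx => by
    rw [map_sub, LinearMap.sub_apply]
    exact H.sub_mem (hsub y hy x hx) (ha x hx)
  let F := (br a).restrict ha
  let G := (br (y - a)).restrict hu
  let FQ := H.mapQ H (br a) ha
  let GQ := H.mapQ H (br (y - a)) hu
  have hFG : ∀ (t : K) (k : ℕ) (x : H), (((F + t • G) ^ k) x : A)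
      = ((br (a + t • (y - a))) ^ k) (x : A) := by
    intro t k
    induction k with
    | zero => intro x; simp
    | succ k ih =>
      intro x
      rw [pow_succ, Module.End.mul_apply, ih, pow_succ, Module.End.mul_apply]
      congr 1
      rw [map_add, map_smul]
      rfl
  have hFQ : LinearMap.ker FQ = ⊥ := by
    rw [LinearMap.ker_eq_bot']
    intro q hq
    obtain ⟨x, rfl⟩ := H.mkQ_surjective q
    have h1 : br a x ∈ H := (Submodule.Quotient.mk_eq_zero H).1 hq
    exact (Submodule.Quotient.mk_eq_zero H).2 ((engel_br_mem_iff br a x).1 h1)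
  have hfin := finite_not_injective_aux FQ GQ hFQ
  have hinf : {t : K | (F + t • G) ^ (Module.finrank K H) = 0}.Infinite := by
    refine (Set.Finite.infinite_compl hfin).mono ?_
    intro t ht
    simp only [Set.mem_compl_iff, Set.mem_ofPred_eq, not_not] at ht ⊢
    have hle : engel br (a + t • (y - a)) ≤ H := by
      intro z hz
      rw [mem_engel_aux] at hz
      obtain ⟨k, hk⟩ := hz
      induction k generalizing z with
      | zero =>
        have : z = 0 := by simpa using hk
        rw [this]; exact H.zero_mem
      | succ k ih =>
        rw [pow_succ, Module.End.mul_apply] at hk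
        have h1 := ih hk
        rw [LinearMap.ker_eq_bot'] at ht
        refine (Submodule.Quotient.mk_eq_zero H).1 (ht (Submodule.Quotient.mk z) ?_)
        rw [← Submodule.Quotient.mk_eq_zero H, map_add, map_smul] at h1
        exact h1
    have heq := hmin _ hle
    have hnil : IsNilpotent (F + t • G) := by
      refine (Module.End.isNilpotent_iff_of_finite (R := K)).2 ?_
      intro x
      have hx : (x : A) ∈ engel br (a + t • (y - a)) := by rw [heq]; exact x.2
      obtain ⟨k, hk⟩ := (mem_engel_aux br _ _).1 hx
      exact ⟨k, Subtype.ext (by rw [hFG, hk]; rfl)⟩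
    have := (LinearMap.charpoly_eq_X_pow_iff _).2
      (fun x => by obtain ⟨k, hk⟩ := hnil; exact ⟨k, by rw [hk]; rfl⟩)
    have hc := LinearMap.aeval_self_charpoly (F + t • G)
    rw [this] at hc
    simpa using hc
  have hfinal := pow_eq_zero_aux F G _ hinf 1
  intro x hx
  have h3 := hFG 1 (Module.finrank K H) ⟨x, hx⟩
  rw [hfinal] at h3
  simpa using h3.symm

attribute [local instance] LieRing.ofAssociativeRing

lemma lcsIn_eq_bot_aux [FiniteDimensional K A]
    (leibniz : ∀ a b c : A, br a (br b c) = br (br a b) c + br b (br a c))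
    (H : Submodule K A)
    (hsub : ∀ x ∈ H, ∀ y ∈ H, br x y ∈ H) (r : ℕ)
    (hnil : ∀ y ∈ H, ∀ x ∈ H, ((br y) ^ r) x = 0) :
    ∃ m : ℕ, lcsIn br H m = ⊥ := by
  let S : LieSubalgebra K (Module.End K H) :=
    { carrier := {f | ∃ y ∈ H, ∀ x : H, (f x : A) = br y x}
      add_mem' := by
        rintro f g ⟨y, hy, hf⟩ ⟨z, hz, hg⟩
        exact ⟨y + z, H.add_mem hy hz, fun x => by simp [hf, hg]⟩
      zero_mem' := ⟨0, H.zero_mem, fun x => by simp⟩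
      smul_mem' := by
        rintro c f ⟨y, hy, hf⟩
        exact ⟨c • y, H.smul_mem c hy, fun x => by simp [hf]⟩
      lie_mem' := by
        rintro f g ⟨y, hy, hf⟩ ⟨z, hz, hg⟩
        refine ⟨br y z, hsub y hy z hz, fun x => ?_⟩
        rw [Ring.lie_def]
        simp only [LinearMap.sub_apply, Module.End.mul_apply, Submodule.coe_sub, hf, hg]
        rw [leibniz]
        abel }
  have hN : LieModule.IsNilpotent S H := by
    refine (LieAlgebra.isEngelian_of_isNoetherian (R := K) (L := S)) H ?_
    rintro ⟨f, y, hy, hf⟩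
    refine ⟨r, ?_⟩
    ext x
    have key : ∀ (k : ℕ) (x : H), (((f ^ k) x : H) : A) = ((br y) ^ k) (x : A) := by
      intro k
      induction k with
      | zero => intro x; simp
      | succ k ih =>
        intro x
        rw [pow_succ, Module.End.mul_apply, ih, pow_succ, Module.End.mul_apply, hf]
    exact (key r x).trans (hnil y hy x x.2)
  obtain ⟨m, hm⟩ := (LieModule.isNilpotent_iff K S H).1 hN
  have hle : ∀ k, lcsIn br H k ≤
      ((LieModule.lowerCentralSeries K S H k : LieSubmodule K S H) : Submodule K H).map
        H.subtype := by
    intro k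
    induction k with
    | zero => simp [lcsIn]
    | succ k ih =>
      rw [lcsIn, bracketSpan, Submodule.span_le]
      rintro _ ⟨u, hu, v, hv, rfl⟩
      obtain ⟨w, hw, rfl⟩ := ih hv
      let f : Module.End K H := (br u).restrict (fun x hx => hsub u hu x hx)
      let fS : S := ⟨f, u, hu, fun x => rfl⟩
      refine ⟨⁅fS, w⁆, ?_, rfl⟩
      rw [LieModule.lowerCentralSeries_succ]
      exact LieSubmodule.lie_mem_lie (LieSubmodule.mem_top _) hw
  refine ⟨m, ?_⟩
  rw [eq_bot_iff]
  refine (hle m).trans ?_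
  rw [hm]
  simp

end

/-- a subalgebra of a finite-dimensional (left) Leibniz algebra over
an algebraically closed field of characteristic zero that is minimal among all
Engel subalgebras is a Cartan subalgebra; in particular Cartan subalgebras exist. -/
theorem leibniz_minimal_engel_is_cartan
    {K A : Type*} [Field K] [IsAlgClosed K] [CharZero K]
    [AddCommGroup A] [Module K A] [FiniteDimensional K A]
    (br : A →ₗ[K] A →ₗ[K] A)
    (leibniz : ∀ a b c : A, br a (br b c) = br (br a b) c + br b (br a c))
    (a : A)
    (hmin : ∀ b : A, engel br b ≤ engel br a → engel br b = engel br a) :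
    IsCartanSubalgebra br (engel br a) ∧
      ∃ H : Submodule K A, IsCartanSubalgebra br H := by
  have hC : IsCartanSubalgebra br (engel br a) := by
    have hsub : ∀ x ∈ engel br a, ∀ y ∈ engel br a, br x y ∈ engel br a := by
      intro x hx y hy
      obtain ⟨i, hi⟩ := (mem_engel_aux br a x).1 hx
      obtain ⟨j, hj⟩ := (mem_engel_aux br a y).1 hy
      exact (mem_engel_aux br a _).2
        ⟨i + j, engel_subalgebra_aux br leibniz a _ i j le_rfl x y hi hj⟩
    have : Infinite K := inferInstance
    refine ⟨hsub, lcsIn_eq_bot_aux br leibniz _ hsub _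
      (nilpotent_on_engel_aux br a hsub hmin), ?_⟩
    intro x hx
    obtain ⟨a', ha', h⟩ := exists_mem_engel_aux br leibniz a
    have := (hx a' ha').2
    rw [h] at this
    exact (engel_br_mem_iff br a x).1 this
  exact ⟨hC, _, hC⟩
end

section
/- Let A be a finite-dimensional semisimple (left) Leibniz algebra over an algebraically closed field of characteristic zero. Then A = (S_1 ⊕ S_2 ⊕ ... ⊕ S_k) ⊕ Leib(A) as a direct sum of vector spaces, where S = S_1 ⊕ ... ⊕ S_k is a subalgebra of A on which the bracket is antisymmetric (so S is a Lie algebra) and each S_j is an ideal of S that is a simple Lie algebra. -/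
/-- Derived series of a subspace `I` (computed inside the ambient algebra):
`derSeriesIn br I 0 = I`, `derSeriesIn br I (n+1) = [derSeriesIn br I n, derSeriesIn br I n]`.
A subalgebra/ideal `I` is solvable iff some term vanishes. -/
def derSeriesIn {K A : Type*} [Field K] [AddCommGroup A] [Module K A]
    (br : A →ₗ[K] A →ₗ[K] A) (I : Submodule K A) : ℕ → Submodule K A
  | 0 => I
  | n + 1 => bracketSpan br (derSeriesIn br I n) (derSeriesIn br I n)

/-- `Leib(A)`: the span of all squares `[a, a]`. -/
def leibIdeal {K A : Type*} [Field K] [AddCommGroup A] [Module K A]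
    (br : A →ₗ[K] A →ₗ[K] A) : Submodule K A :=
  Submodule.span K {x | ∃ a : A, br a a = x}

namespace LeibWeyl
set_option linter.unusedSectionVars false
open LieModule LieAlgebra

section
variable {K L V : Type*} [Field K] [CharZero K] [LieRing L] [LieAlgebra K L]
  [FiniteDimensional K L] [IsKilling K L]
  [AddCommGroup V] [Module K V] [LieRingModule L V] [LieModule K L V] [FiniteDimensional K V]

/-- A Killing Lie algebra is perfect. -/
lemma perfect : (⁅(⊤ : LieIdeal K L), (⊤ : LieIdeal K L)⁆ : LieIdeal K L) = ⊤ := by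
  set D : LieIdeal K L := ⁅(⊤ : LieIdeal K L), (⊤ : LieIdeal K L)⁆ with hD
  have h := LieIdeal.isCompl_killingCompl D
  have h0 : LieIdeal.killingCompl K L D = ⊥ := by
    rw [LieSubmodule.eq_bot_iff]
    intro z hz
    rw [LieIdeal.mem_killingCompl] at hz
    have hc : z ∈ center K L := by
      rw [LieModule.mem_maxTrivSubmodule]
      intro y
      have : ⁅y, z⁆ ∈ LinearMap.ker (killingForm K L) := by
        rw [LinearMap.mem_ker]
        ext x
        rw [LieModule.traceForm_comm, ← LieModule.traceForm_apply_lie_apply]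
        exact hz _ (LieSubmodule.lie_mem_lie (LieSubmodule.mem_top x) (LieSubmodule.mem_top y))
      simpa using this
    simpa using hc
  rw [h0] at h
  simpa using h.sup_eq_top


/-- trace form zero implies trivial action. -/
lemma trivial_of_traceForm (h : traceForm K L V = 0) (x : L) (v : V) : ⁅x, v⁆ = 0 := by
  have hn := LieModule.isNilpotent_derivedSeries_of_traceForm_eq_zero h
  have hD : derivedSeries K L 1 = ⊤ := by
    rw [LieAlgebra.derivedSeries_def, LieAlgebra.derivedSeriesOfIdeal_succ,
      LieAlgebra.derivedSeriesOfIdeal_zero, perfect]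
  have hn' : LieModule.IsNilpotent L V := by
    rw [LieModule.isNilpotent_iff_forall' (R := K)] at hn ⊢
    intro x
    exact hn ⟨x, by rw [hD]; trivial⟩
  obtain ⟨n, hn⟩ := (LieModule.isNilpotent_iff K L V).mp hn'
  have key : ∀ k : ℕ, ∀ x : L, ∀ j, ∀ v ∈ lowerCentralSeries K L V j,
      ⁅x, v⁆ ∈ lowerCentralSeries K L V (j + k + 1) := by
    have base : ∀ x : L, ∀ j, ∀ v ∈ lowerCentralSeries K L V j,
      ⁅x, v⁆ ∈ lowerCentralSeries K L V (j + 1) := fun x j v hv => by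
      rw [lowerCentralSeries_succ]
      exact LieSubmodule.lie_mem_lie (LieSubmodule.mem_top x) hv
    intro k
    induction k with
    | zero => simpa using base
    | succ k ih =>
      intro x
      have hx : x ∈ (⁅(⊤ : LieIdeal K L), (⊤ : LieIdeal K L)⁆ : LieIdeal K L) := by
        rw [perfect]; trivial
      rw [← LieSubmodule.mem_toSubmodule, LieSubmodule.lieIdeal_oper_eq_linear_span'] at hx
      induction hx using Submodule.span_induction with
      | mem x h =>
        obtain ⟨a, -, b, -, rfl⟩ := h
        intro j v hv
        rw [lie_lie]
        refine sub_mem ?_ ?_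
        · exact base a _ _ (ih b j v hv)
        · have := ih b _ _ (base a j v hv)
          rwa [show j + 1 + k + 1 = j + (k + 1) + 1 by ring] at this
      | zero => intro j v hv; simp
      | add x y _ _ hx hy => intro j v hv; rw [add_lie]; exact add_mem (hx j v hv) (hy j v hv)
      | smul a x _ hx => intro j v hv; rw [smul_lie]; exact Submodule.smul_mem _ _ (hx j v hv)
  have h1 := key n x 0 v (by simp)
  have h2 : lowerCentralSeries K L V (0 + n + 1) = ⊥ := by
    rw [zero_add, lowerCentralSeries_succ, hn]; simp
  rw [h2] at h1
  simpa using h1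

/-- The Casimir element: either trivial action or a non-nilpotent commuting operator with
image in `L V`. -/
lemma exists_casimir (hnt : ¬ ∀ (x : L) (v : V), ⁅x, v⁆ = 0) :
    ∃ c : Module.End K V, (∀ (x : L) (v : V), c ⁅x, v⁆ = ⁅x, c v⁆) ∧ ¬ IsNilpotent c ∧
      ∀ (Q : Type _) [AddCommGroup Q] [Module K Q] (l : V →ₗ[K] Q),
        (∀ (x : L) (v : V), l ⁅x, v⁆ = 0) → ∀ v, l (c v) = 0 := by
  classical
  let I : LieIdeal K L := LieAlgebra.InvariantForm.orthogonal (traceForm K L V)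
    (LieModule.traceForm_lieInvariant K L V) ⊤
  have hI : ∀ x, x ∈ I ↔ ∀ y, traceForm K L V y x = 0 := by
    intro x
    simp [I, LieAlgebra.InvariantForm.mem_orthogonal]
  let J : LieIdeal K L := LieIdeal.killingCompl K L I
  have hIJ : IsCompl I J := LieIdeal.isCompl_killingCompl I
  have hJ : J ≠ ⊥ := by
    intro hJ
    apply hnt
    rw [hJ] at hIJ
    have hIt : I = ⊤ := by simpa using hIJ.sup_eq_top
    apply trivial_of_traceForm (K := K)
    ext x y
    exact (hI y).mp (hIt ▸ LieSubmodule.mem_top y) x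
  let B : LinearMap.BilinForm K J := traceForm K J V
  have hBap : ∀ x y : J, B x y = traceForm K L V (x : L) (y : L) := fun x y => rfl
  have hsym : B.IsSymm := ⟨fun x y => LieModule.traceForm_comm K J V x y⟩
  have hB : B.Nondegenerate := by
    refine hsym.isRefl.nondegenerate_iff_separatingLeft.mpr ?_
    intro x hx
    have : (x : L) ∈ I := by
      rw [hI]
      intro y
      have hy : y ∈ I ⊔ J := by rw [hIJ.sup_eq_top]; trivial
      obtain ⟨i, hi, j, hj, rfl⟩ := LieSubmodule.mem_sup _ _ _ |>.mp hy
      rw [map_add, LinearMap.add_apply, LieModule.traceForm_comm, (hI i).mp hi, zero_add,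
        LieModule.traceForm_comm]
      exact hx ⟨j, hj⟩
    have h2 : (x : L) ∈ I ⊓ J := ⟨this, x.2⟩
    rw [hIJ.inf_eq_bot] at h2
    ext
    simpa using h2
  let b := Module.finBasis K J
  let d := B.dualBasis hB b
  let φ := toEnd K L V
  let c : Module.End K V := ∑ i, φ (b i : L) * φ (d i : L)
  have hbexp : ∀ y : J, y = ∑ i, B (d i) y • b i := by
    intro y
    conv_lhs => rw [← (B.dualBasis hB d).sum_repr y]
    refine Finset.sum_congr rfl fun i _ => ?_
    rw [LinearMap.BilinForm.dualBasis_repr_apply,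
      LinearMap.BilinForm.dualBasis_dualBasis hB hsym b, hsym.eq]
  have hdexp : ∀ y : J, y = ∑ i, B y (b i) • d i := by
    intro y
    conv_lhs => rw [← (B.dualBasis hB b).sum_repr y]
    refine Finset.sum_congr rfl fun i _ => ?_
    rw [LinearMap.BilinForm.dualBasis_repr_apply]
  have hinv : ∀ (x : L) (y z : J), B ⁅x, y⁆ z = - B y ⁅x, z⁆ := by
    intro x y z
    rw [hBap, hBap]
    exact LieModule.traceForm_apply_lie_apply' K L V x y z
  refine ⟨c, ?_, ?_, ?_⟩
  · intro x v
    have e1 : ∀ i, φ ((⁅x, b i⁆ : J) : L) = ∑ j, B (d j) ⁅x, b i⁆ • φ (b j : L) := by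
      intro i
      conv_lhs => rw [hbexp ⁅x, b i⁆]
      simp
    have e2 : ∀ i, φ ((⁅x, d i⁆ : J) : L) = ∑ j, B ⁅x, d i⁆ (b j) • φ (d j : L) := by
      intro i
      conv_lhs => rw [hdexp ⁅x, d i⁆]
      simp
    have e3 : ∑ i, (φ ((⁅x, b i⁆ : J) : L) * φ (d i : L) + φ (b i : L) * φ ((⁅x, d i⁆ : J) : L))
        = 0 := by
      simp_rw [e1, e2, Finset.sum_add_distrib, Finset.sum_mul, Finset.mul_sum]
      rw [Finset.sum_comm, ← Finset.sum_add_distrib]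
      refine Finset.sum_eq_zero fun i _ => ?_
      rw [← Finset.sum_add_distrib]
      refine Finset.sum_eq_zero fun j _ => ?_
      rw [hinv]
      simp
    have e4 := congrArg (fun f : Module.End K V => f v) e3
    simp only [LinearMap.sum_apply, LinearMap.add_apply, Module.End.mul_apply, φ,
      toEnd_apply_apply, LieSubmodule.coe_bracket, LinearMap.zero_apply, lie_lie] at e4
    simp only [c, LinearMap.sum_apply, Module.End.mul_apply, φ, toEnd_apply_apply, lie_sum]
    rw [eq_comm, ← sub_eq_zero, ← Finset.sum_sub_distrib, ← e4]
    refine Finset.sum_congr rfl fun i _ => ?_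
    rw [lie_sub]
    abel
  · intro hc
    have h1 : LinearMap.trace K V c = 0 := 
      (LinearMap.isNilpotent_trace_of_isNilpotent hc).eq_zero
    have h2 : LinearMap.trace K V c = (Module.finrank K J : K) := by
      have : ∀ i, LinearMap.trace K V (φ (b i : L) * φ (d i : L)) = 1 := by
        intro i
        have := LinearMap.BilinForm.apply_dualBasis_right hB hsym b i i
        rw [if_pos rfl] at this
        exact this
      simp [c, this]
    rw [h1] at h2
    have h3 : Module.finrank K J = 0 := by exact_mod_cast h2.symm
    have h4 : Subsingleton J := Module.finrank_zero_iff.mp h3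
    apply hJ
    rw [LieSubmodule.eq_bot_iff]
    intro x hx
    simpa using congrArg Subtype.val (Subsingleton.elim (⟨x, hx⟩ : J) 0)
  · intro Q _ _ l hl v
    simp [c, φ, LinearMap.sum_apply, hl]
end

/-- Invariants surject onto trivial quotients. -/
lemma exists_invariant {K L : Type*} [Field K] [CharZero K] [LieRing L] [LieAlgebra K L]
    [FiniteDimensional K L] [IsKilling K L] {Q : Type*} [AddCommGroup Q] [Module K Q] (n : ℕ) :
    ∀ (V : Type _) [AddCommGroup V] [Module K V] [LieRingModule L V] [LieModule K L V]
    [FiniteDimensional K V], Module.finrank K V = n → ∀ (l : V →ₗ[K] Q)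
    (_ : ∀ (x : L) (v : V), l ⁅x, v⁆ = 0) (v : V),
    ∃ u : V, (∀ x : L, ⁅x, u⁆ = 0) ∧ l u = l v := by
  induction n using Nat.strong_induction_on with
  | _ n ih =>
  intro V _ _ _ _ _ hn l hl v
  by_cases hnt : ∀ (x : L) (v : V), ⁅x, v⁆ = 0
  · exact ⟨v, fun x => hnt x v, rfl⟩
  obtain ⟨c, hc, hcn, hcl⟩ := exists_casimir (K := K) hnt
  obtain ⟨N, hN⟩ := Filter.eventually_atTop.mp c.eventually_isCompl_ker_pow_range_pow
  have hk := hN (N + 1) (by omega)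
  have hck : ∀ (k : ℕ) (x : L) (v : V), (c ^ k) ⁅x, v⁆ = ⁅x, (c ^ k) v⁆ := by
    intro k
    induction k with
    | zero => simp
    | succ k ih => intro x v; rw [pow_succ', Module.End.mul_apply, ih, hc]; rfl
  let W : LieSubmodule K L V :=
    { LinearMap.ker (c ^ (N + 1)) with
      lie_mem := fun {x m} hm => by
        have hm' : (c ^ (N + 1)) m = 0 := hm
        change (c ^ (N + 1)) ⁅x, m⁆ = 0
        rw [hck, hm', lie_zero] }
  have hWlt : Module.finrank K W < n := by
    rw [← hn]
    apply Submodule.finrank_lt (s := LinearMap.ker (c ^ (N + 1)))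
    intro h
    exact hcn ⟨N + 1, LinearMap.ker_eq_top.mp h⟩
  have hv : v ∈ LinearMap.ker (c ^ (N + 1)) ⊔ LinearMap.range (c ^ (N + 1)) := by
    rw [hk.sup_eq_top]; trivial
  obtain ⟨a, ha, r, ⟨w, rfl⟩, rfl⟩ := Submodule.mem_sup.mp hv
  obtain ⟨u, hu, hlu⟩ := ih _ hWlt W rfl (l ∘ₗ (W : Submodule K V).subtype)
    (fun x v => hl x v) ⟨a, ha⟩
  refine ⟨u, fun x => ?_, ?_⟩
  · exact congrArg Subtype.val (hu x)
  · rw [map_add, pow_succ', Module.End.mul_apply, hcl Q l hl, add_zero]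
    exact hlu

/-- A surjection of Lie modules onto `N` splits. -/
lemma exists_section {K L A N : Type*} [Field K] [CharZero K] [LieRing L] [LieAlgebra K L]
    [FiniteDimensional K L] [IsKilling K L]
    [AddCommGroup A] [Module K A] [LieRingModule L A] [LieModule K L A] [FiniteDimensional K A]
    [AddCommGroup N] [Module K N] [LieRingModule L N] [LieModule K L N] [FiniteDimensional K N]
    (p : A →ₗ[K] N) (hp : ∀ (x : L) (a : A), p ⁅x, a⁆ = ⁅x, p a⁆) (hs : Function.Surjective p) :
    ∃ s : N →ₗ[K] A, (∀ y, p (s y) = y) ∧ ∀ (x : L) (y : N), s ⁅x, y⁆ = ⁅x, s y⁆ := by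
  let V : LieSubmodule K L (N →ₗ[K] A) :=
    { carrier := {f | ∀ (x : L) (y : N), p (f ⁅x, y⁆) = ⁅x, p (f y)⁆}
      add_mem' := fun {f g} hf hg x y => by
        have h1 := hf x y
        have h2 := hg x y
        simp [h1, h2]
      zero_mem' := fun x y => by simp
      smul_mem' := fun t f hf x y => by
        have h1 := hf x y
        simp [h1]
      lie_mem := fun {z f} hf x y => by
        have h1 : ∀ (x : L) (y : N), p (f ⁅x, y⁆) = ⁅x, p (f y)⁆ := hf
        simp [hp, h1] }
  have hV : ∀ f ∈ V, ∀ (x : L) (y : N), p (f ⁅x, y⁆) = ⁅x, p (f y)⁆ := fun f hf => hf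
  obtain ⟨g, hg⟩ := p.exists_rightInverse_of_surjective (LinearMap.range_eq_top.mpr hs)
  have hg' : ∀ y, p (g y) = y := fun y => LinearMap.congr_fun hg y
  let l : V →ₗ[K] (N →ₗ[K] N) := 
    (LinearMap.compRight K (M := N) p) ∘ₗ (V : Submodule K (N →ₗ[K] A)).subtype
  have hl : ∀ (v : V) (y : N), l v y = p ((v : N →ₗ[K] A) y) := fun _ _ => rfl
  obtain ⟨u, hu, hlu⟩ := exists_invariant (K := K) (L := L) _ V rfl l (by
    intro x v
    ext y
    have := hV v v.2 x y
    simp [hl, hp, this]) ⟨g, fun x y => by simp [hg']⟩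
  refine ⟨u, fun y => ?_, fun x y => ?_⟩
  · have := LinearMap.congr_fun hlu y
    simpa [hl, hg'] using this
  · have h1 : ⁅x, (u : N →ₗ[K] A)⁆ = 0 := congrArg Subtype.val (hu x)
    have := LinearMap.congr_fun h1 y
    rw [LieHom.lie_apply] at this
    rw [eq_comm, ← sub_eq_zero]
    simpa using this

/-- The decomposition, given the Lie algebra `L = A / Leib(A)` acting on `A`. -/
lemma decomp {K L A : Type*} [Field K] [CharZero K] [LieRing L] [LieAlgebra K L]
    [FiniteDimensional K L] [IsKilling K L]
    [AddCommGroup A] [Module K A] [LieRingModule L A] [LieModule K L A] [FiniteDimensional K A]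
    (br : A →ₗ[K] A →ₗ[K] A) (p : A →ₗ[K] L) (hs : Function.Surjective p)
    (hker : LinearMap.ker p = leibIdeal br)
    (hbr : ∀ a b, br a b = ⁅p a, b⁆) (hp : ∀ a b, p (br a b) = ⁅p a, p b⁆) :
    ∃ (k : ℕ) (S : Fin k → Submodule K A),
      IsCompl (⨆ j, S j) (leibIdeal br) ∧
      iSupIndep S ∧
      (∀ x ∈ ⨆ j, S j, ∀ y ∈ ⨆ j, S j, br x y ∈ ⨆ j, S j) ∧
      (∀ x ∈ ⨆ j, S j, ∀ y ∈ ⨆ j, S j, br x y = -br y x) ∧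
      (∀ j : Fin k, ∀ s ∈ ⨆ i, S i, ∀ x ∈ S j, br s x ∈ S j ∧ br x s ∈ S j) ∧
      (∀ j : Fin k, bracketSpan br (S j) (S j) ≠ ⊥ ∧
        ∀ I : Submodule K A, I ≤ S j →
          (∀ s ∈ S j, ∀ x ∈ I, br s x ∈ I ∧ br x s ∈ I) →
          I = ⊥ ∨ I = S j) := by
  have hp' : ∀ (x : L) (a : A), p ⁅x, a⁆ = ⁅x, p a⁆ := by
    intro x a
    obtain ⟨b, rfl⟩ := hs x
    rw [← hbr, hp]
  obtain ⟨s, hps, hse⟩ := exists_section p hp' hs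
  have hsinj : Function.Injective s := fun x y h => by rw [← hps x, h, hps]
  have hsb : ∀ x y, br (s x) (s y) = s ⁅x, y⁆ := by
    intro x y
    rw [hbr, hps, hse]
  have hfin : {I : LieIdeal K L | IsAtom I}.Finite :=
    WellFoundedGT.finite_of_sSupIndep IsSemisimple.sSupIndep_isAtom
  obtain ⟨k, f, hfinj, hrange⟩ : ∃ (k : ℕ) (f : Fin k → LieIdeal K L), Function.Injective f ∧
      Set.range f = {I : LieIdeal K L | IsAtom I} := by
    have := hfin.to_subtype
    obtain ⟨k, ⟨e⟩⟩ := Finite.exists_equiv_fin {I : LieIdeal K L | IsAtom I}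
    refine ⟨k, fun i => (e.symm i : LieIdeal K L), ?_, ?_⟩
    · exact Subtype.val_injective.comp e.symm.injective
    · rw [show (fun i => (e.symm i : LieIdeal K L)) = Subtype.val ∘ e.symm from rfl,
        Set.range_comp, e.symm.range_eq_univ]
      simp
  have hatom : ∀ j, IsAtom (f j) := fun j => by
    have : f j ∈ Set.range f := ⟨j, rfl⟩
    rwa [hrange] at this
  have hind : iSupIndep f := by
    have h := IsSemisimple.sSupIndep_isAtom (R := K) (L := L)
    rw [sSupIndep_iff] at h
    exact h.comp (f := fun j => ⟨f j, hatom j⟩) (fun i j hij => hfinj (congrArg Subtype.val hij))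
  have hindS : iSupIndep (fun j => (f j).toSubmodule) := by
    exact LieSubmodule.iSupIndep_toSubmodule.mpr hind
  have htop : ⨆ j, (f j).toSubmodule = ⊤ := by
    have h := IsSemisimple.sSup_atoms_eq_top (R := K) (L := L)
    rw [← hrange, sSup_range] at h
    rw [← LieSubmodule.iSup_toSubmodule, h]; rfl
  have hsup : ⨆ j, (f j).toSubmodule.map s = LinearMap.range s := by
    rw [← Submodule.map_iSup, htop, Submodule.map_top]
  refine ⟨k, fun j => (f j).toSubmodule.map s, ?_, ?_, ?_, ?_, ?_, ?_⟩
  · rw [hsup, ← hker]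
    refine IsCompl.of_eq ?_ ?_
    · rw [Submodule.eq_bot_iff]
      rintro _ ⟨⟨x, rfl⟩, h⟩
      have h' : p (s x) = 0 := h
      rw [hps] at h'
      rw [h', map_zero]
    · rw [eq_top_iff]
      intro a _
      rw [Submodule.mem_sup]
      refine ⟨s (p a), ⟨_, rfl⟩, a - s (p a), ?_, by abel⟩
      rw [LinearMap.mem_ker, map_sub, hps, sub_self]
  · exact s.iSupIndep_map hsinj hindS
  · rw [hsup]
    rintro _ ⟨x, rfl⟩ _ ⟨y, rfl⟩
    exact ⟨⁅x, y⁆, (hsb x y).symm⟩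
  · rw [hsup]
    rintro _ ⟨x, rfl⟩ _ ⟨y, rfl⟩
    rw [hsb, hsb, ← map_neg, lie_skew]
  · rw [hsup]
    rintro j _ ⟨x, rfl⟩ _ ⟨y, hy, rfl⟩
    rw [hsb, hsb]
    exact ⟨⟨_, (f j).lie_mem hy, rfl⟩, ⟨_, lie_mem_left K L (f j) y x hy, rfl⟩⟩
  · intro j
    constructor
    · intro h
      apply IsSemisimple.non_abelian_of_isAtom (f j) (hatom j)
      refine ⟨fun x y => ?_⟩
      have : br (s x) (s y) ∈ bracketSpan br ((f j).toSubmodule.map s) ((f j).toSubmodule.map s) :=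
        Submodule.subset_span ⟨_, ⟨_, x.2, rfl⟩, _, ⟨_, y.2, rfl⟩, rfl⟩
      rw [h, Submodule.mem_bot, hsb] at this
      have h2 : ⁅(x : L), (y : L)⁆ = 0 := hsinj (by rw [this, map_zero])
      ext
      simpa using h2
    · intro I hI hI2
      have hsimple := IsSemisimple.isSimple_of_isAtom (f j) (hatom j)
      let P : LieIdeal K (f j) :=
        { (I.comap s).comap (f j).toSubmodule.subtype with
          lie_mem := fun {x m} hm => by
            have hm' : s m ∈ I := hm
            have h := (hI2 (s x) ⟨_, x.2, rfl⟩ _ hm').1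
            rw [hsb] at h
            exact h }
      have hP : ∀ x : f j, x ∈ P ↔ s x ∈ I := fun x => Iff.rfl
      rcases hsimple.eq_bot_or_eq_top P with h | h
      · left
        rw [Submodule.eq_bot_iff]
        intro a ha
        obtain ⟨x, hx, rfl⟩ := hI ha
        have h1 : (⟨x, hx⟩ : f j) ∈ P := ha
        rw [h, LieSubmodule.mem_bot] at h1
        have h2 : x = 0 := congrArg Subtype.val h1
        rw [h2, map_zero]
      · right
        refine le_antisymm hI ?_
        rintro _ ⟨x, hx, rfl⟩
        have h1 : (⟨x, hx⟩ : f j) ∈ P := by rw [h]; trivial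
        exact h1

section quot
variable {K A : Type*} [Field K] [AddCommGroup A] [Module K A]
  (br : A →ₗ[K] A →ₗ[K] A)

lemma leib_left
    (leibniz : ∀ a b c : A, br a (br b c) = br (br a b) c + br b (br a c)) :
    leibIdeal br ≤ LinearMap.ker br := by
  rw [leibIdeal, Submodule.span_le]
  rintro _ ⟨a, rfl⟩
  change br (br a a) = 0
  ext c
  have := leibniz a a c
  simpa using this

lemma symm_mem
    (a b : A) : br a b + br b a ∈ leibIdeal br := by
  have h : ∀ a, br a a ∈ leibIdeal br := fun a => Submodule.subset_span ⟨a, rfl⟩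
  have := sub_mem (sub_mem (h (a + b)) (h a)) (h b)
  simp only [map_add, LinearMap.add_apply] at this
  convert this using 1
  abel

lemma leib_right
    (leibniz : ∀ a b c : A, br a (br b c) = br (br a b) c + br b (br a c))
    (a : A) {x : A} (hx : x ∈ leibIdeal br) : br a x ∈ leibIdeal br := by
  have h0 : br x a = 0 := by
    have := leib_left br leibniz hx
    rw [LinearMap.mem_ker] at this
    rw [this]; rfl
  simpa [h0] using symm_mem br a x

variable (leibniz : ∀ a b c : A, br a (br b c) = br (br a b) c + br b (br a c))

/-- The left action of the quotient on `A`. -/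
noncomputable def act : (A ⧸ leibIdeal br) →ₗ[K] A →ₗ[K] A :=
  (leibIdeal br).liftQ br (leib_left br leibniz)

lemma act_mk (a b : A) : act br leibniz ((leibIdeal br).mkQ a) b = br a b := rfl

lemma act_leib (x : A ⧸ leibIdeal br) :
    leibIdeal br ≤ (leibIdeal br).comap (act br leibniz x) := by
  obtain ⟨a, rfl⟩ := (leibIdeal br).mkQ_surjective x
  intro y hy
  exact leib_right br leibniz a hy

/-- The Lie ring structure on the quotient. -/
@[reducible] noncomputable def lieRingQ : LieRing (A ⧸ leibIdeal br) where
  bracket x y := (leibIdeal br).mapQ (leibIdeal br) (act br leibniz x) (act_leib br leibniz x) y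
  add_lie x y z := by
    obtain ⟨x, rfl⟩ := (leibIdeal br).mkQ_surjective x
    obtain ⟨y, rfl⟩ := (leibIdeal br).mkQ_surjective y
    obtain ⟨z, rfl⟩ := (leibIdeal br).mkQ_surjective z
    change (leibIdeal br).mkQ (act br leibniz (_ + _) z) =
      (leibIdeal br).mkQ (br x z) + (leibIdeal br).mkQ (br y z)
    rw [map_add, LinearMap.add_apply, map_add]; rfl
  lie_add x y z := map_add _ _ _
  lie_self x := by
    obtain ⟨x, rfl⟩ := (leibIdeal br).mkQ_surjective x
    change (leibIdeal br).mkQ (br x x) = 0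
    rw [← LinearMap.mem_ker, Submodule.ker_mkQ]
    exact Submodule.subset_span ⟨x, rfl⟩
  leibniz_lie x y z := by
    obtain ⟨x, rfl⟩ := (leibIdeal br).mkQ_surjective x
    obtain ⟨y, rfl⟩ := (leibIdeal br).mkQ_surjective y
    obtain ⟨z, rfl⟩ := (leibIdeal br).mkQ_surjective z
    change (leibIdeal br).mkQ (br x (br y z)) =
      (leibIdeal br).mkQ (br (br x y) z) + (leibIdeal br).mkQ (br y (br x z))
    rw [leibniz, map_add]

/-- The Lie algebra structure on the quotient. -/
@[reducible] noncomputable def lieAlgQ :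
    @LieAlgebra K (A ⧸ leibIdeal br) _ (lieRingQ br leibniz) :=
  letI := lieRingQ br leibniz
  { lie_smul := fun t x y => by
      change (leibIdeal br).mapQ (leibIdeal br) (act br leibniz x) (act_leib br leibniz x) (t • y)
        = _
      rw [map_smul]; rfl }

/-- The Lie ring module structure. -/
@[reducible] noncomputable def lieRingModQ :
    @LieRingModule (A ⧸ leibIdeal br) A (lieRingQ br leibniz) _ :=
  letI := lieRingQ br leibniz
  { bracket := fun x a => act br leibniz x a
    add_lie := fun x y a => by
      change act br leibniz (x + y) a = act br leibniz x a + act br leibniz y a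
      rw [map_add]; rfl
    lie_add := fun x a b => map_add (act br leibniz x) a b
    leibniz_lie := fun x y a => by
      obtain ⟨x, rfl⟩ := (leibIdeal br).mkQ_surjective x
      obtain ⟨y, rfl⟩ := (leibIdeal br).mkQ_surjective y
      exact leibniz x y a }

/-- The Lie module structure. -/
lemma lieModQ : @LieModule K (A ⧸ leibIdeal br) A _ (lieRingQ br leibniz)
    (lieAlgQ br leibniz) _ _ (lieRingModQ br leibniz) :=
  letI := lieRingQ br leibniz
  letI := lieAlgQ br leibniz
  letI := lieRingModQ br leibniz
  { smul_lie := fun t x a => by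
      change act br leibniz (t • x) a = t • act br leibniz x a
      rw [map_smul]; rfl
    lie_smul := fun t x a => map_smul (act br leibniz x) t a }

end quot
end LeibWeyl

/-- a finite-dimensional semisimple (left) Leibniz algebra over an
algebraically closed field of characteristic zero (i.e. every solvable ideal is
contained in `Leib(A)`) decomposes as `A = (S_1 ⊕ ⋯ ⊕ S_k) ⊕ Leib(A)` where
`S = S_1 ⊕ ⋯ ⊕ S_k` is a subalgebra with antisymmetric bracket (a Lie algebra)
and each `S_j` is an ideal of `S` that is a simple Lie algebra. -/
theorem semisimple_leibniz_decomposition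
    {K A : Type*} [Field K] [IsAlgClosed K] [CharZero K]
    [AddCommGroup A] [Module K A] [FiniteDimensional K A]
    (br : A →ₗ[K] A →ₗ[K] A)
    (leibniz : ∀ a b c : A, br a (br b c) = br (br a b) c + br b (br a c))
    (hss : ∀ I : Submodule K A, (∀ a : A, ∀ x ∈ I, br a x ∈ I ∧ br x a ∈ I) →
      (∃ m : ℕ, derSeriesIn br I m = ⊥) → I ≤ leibIdeal br) :
    ∃ (k : ℕ) (S : Fin k → Submodule K A),
      IsCompl (⨆ j, S j) (leibIdeal br) ∧
      iSupIndep S ∧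
      (∀ x ∈ ⨆ j, S j, ∀ y ∈ ⨆ j, S j, br x y ∈ ⨆ j, S j) ∧
      (∀ x ∈ ⨆ j, S j, ∀ y ∈ ⨆ j, S j, br x y = -br y x) ∧
      (∀ j : Fin k, ∀ s ∈ ⨆ i, S i, ∀ x ∈ S j, br s x ∈ S j ∧ br x s ∈ S j) ∧
      (∀ j : Fin k, bracketSpan br (S j) (S j) ≠ ⊥ ∧
        ∀ I : Submodule K A, I ≤ S j →
          (∀ s ∈ S j, ∀ x ∈ I, br s x ∈ I ∧ br x s ∈ I) →
          I = ⊥ ∨ I = S j) := by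
  letI := LeibWeyl.lieRingQ br leibniz
  letI := LeibWeyl.lieAlgQ br leibniz
  letI := LeibWeyl.lieRingModQ br leibniz
  haveI := LeibWeyl.lieModQ br leibniz
  have hbr : ∀ a b : A, (leibIdeal br).mkQ (br a b) =
    ⁅(leibIdeal br).mkQ a, (leibIdeal br).mkQ b⁆ := fun a b => rfl
  have hmk : ∀ a : A, a ∈ leibIdeal br ↔ (leibIdeal br).mkQ a = 0 := fun a => by
    rw [← LinearMap.mem_ker, Submodule.ker_mkQ]
  haveI : LieAlgebra.HasTrivialRadical K (A ⧸ leibIdeal br) := by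
    rw [LieAlgebra.hasTrivialRadical_iff_no_abelian_ideals]
    intro I hI
    let P : Submodule K A := I.toSubmodule.comap (leibIdeal br).mkQ
    have hP : ∀ a, a ∈ P ↔ (leibIdeal br).mkQ a ∈ I := fun a => Iff.rfl
    have hPL : P ≤ leibIdeal br := by
      apply hss P
      · intro a x hx
        rw [hP] at hx
        rw [hP, hP, hbr, hbr]
        exact ⟨I.lie_mem hx, lie_mem_left K _ I _ _ hx⟩
      · refine ⟨2, ?_⟩
        have h1 : derSeriesIn br P 1 ≤ leibIdeal br := by
          refine Submodule.span_le.mpr ?_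
          rintro _ ⟨a, ha, b, hb, rfl⟩
          change br a b ∈ leibIdeal br
          rw [hmk, hbr]
          have h := hI.trivial ⟨_, (hP a).mp ha⟩ ⟨_, (hP b).mp hb⟩
          exact congrArg Subtype.val h
        rw [eq_bot_iff]
        refine Submodule.span_le.mpr ?_
        rintro _ ⟨a, ha, b, hb, rfl⟩
        have h := LeibWeyl.leib_left br leibniz (h1 ha)
        rw [LinearMap.mem_ker] at h
        rw [h]; simp
    rw [LieSubmodule.eq_bot_iff]
    intro x hx
    obtain ⟨a, rfl⟩ := (leibIdeal br).mkQ_surjective x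
    exact (hmk a).mp (hPL hx)
  exact LeibWeyl.decomp br (leibIdeal br).mkQ (leibIdeal br).mkQ_surjective
    (Submodule.ker_mkQ _) (fun a b => rfl) hbr
end
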